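/- Under the same OCELAD weight construction (convex losses ℓ_t on a convex set Θ ⊆ ℝ^n; per-interval learner outputs θ_t(I); η_I = min{1/2, 1/√|I|}; weights w̃_t(I) and w_t(I) defined by the multiplicative recursion w̃_{t+1}(I) = w̃_t(I)(1 + η_I ρ_t r_t(I)) on I; ensemble estimate θ̂_t equal to the w_t-weighted average of the active θ_t(I); estimated regret r_t(I) = ℓ_t(θ̂_t) − ℓ_t(θ_t(I)); and normalization ρ_t = 1 / max_{I∈ACT(t)} |r_t(I)|), for every dyadic interval I = [q,s] ∈ 𝓘 one has Σ_{t=q}^{s} ρ_t r_t(I) ≤ 5 ln(s+1) √|I|. -/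

import Mathlib

/-!
The proof is the potential argument for multiplicative weights with sleeping experts.
Jensen's inequality for the weighted average `θ̂_t` gives `∑_{I ∈ ACT t} w_t(I) r_t(I) ≤ 0`,
and `w_t(I) ρ_t r_t(I)` is exactly the increment of `w̃(I)` at time `t`. Hence, counting each
interval that has not started yet with weight `1`, the total weight of any finite family that
contains all active intervals never increases. For the family of indices `j ≤ log₂ T`,
`1 ≤ k ≤ T`, with `T = s + 1`, it starts at `(log₂ T + 1) T ≤ T²`, so `w̃_T(I) ≤ T²`.

Conversely, `1 + x ≥ exp (x - x²)` for `|x| ≤ 1/2` (`exp_sub_sq_le_one_add`) gives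
`w̃_T(I) ≥ exp (η ∑ ρ_t r_t(I) - η² |I|)`. Taking logarithms with `η = 1/√|I|` yields
`∑ ρ_t r_t(I) ≤ √|I| (1 + 2 ln T)`, which suffices for `|I| ≥ 4`. When `|I| ≤ 2` the trivial
bound `∑ ρ_t r_t(I) ≤ |I|` is enough.
-/

open Finset

/-- The dyadic interval indexed by `(j, k)` (with `k ≥ 1`):
the integer interval `[k·2^j, (k+1)·2^j − 1]`, which has `2^j` elements. -/
def dyadicI (j k : ℕ) : Finset ℕ := Finset.Icc (k * 2 ^ j) ((k + 1) * 2 ^ j - 1)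

/-- `ACT t`: the (indices of the) dyadic intervals containing `t`.  Any dyadic
interval `(j, k)` containing `t ≥ 1` has `j ≤ log₂ t` and `1 ≤ k ≤ t`, so this
finite set is exactly `{I ∈ 𝓘 : t ∈ I}`. -/
def ACT (t : ℕ) : Finset (ℕ × ℕ) :=
  ((Finset.Iic (Nat.log 2 t)) ×ˢ (Finset.Icc 1 t)).filter fun p => t ∈ dyadicI p.1 p.2

/-- The OCELAD learning rate of a dyadic interval of length `2^j`:
`η_I = min {1/2, 1/√|I|}`. -/
noncomputable def ηI (j : ℕ) : ℝ := min (1 / 2) (1 / Real.sqrt (2 ^ j))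

theorem exp_sub_sq_le_one_add {x : ℝ} (h1 : -(1 / 2) ≤ x) (h2 : x ≤ 1 / 2) :
    Real.exp (x - x ^ 2) ≤ 1 + x := by
  rcases le_total 0 x with hx | hx
  · have hy : |x - x ^ 2| ≤ 1 := by
      rw [abs_le]; constructor <;> nlinarith
    have h := (abs_le.mp (Real.abs_exp_sub_one_sub_id_le hy)).2
    nlinarith [mul_nonneg (sq_nonneg x) (mul_nonneg hx (by linarith : (0 : ℝ) ≤ 2 - x))]
  · -- Here `exp (x - x²) = 1 / exp z` with `z = x² - x ≥ 0`, and `exp z ≥ 1 + z + z² / 2`.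
    have hz : 0 ≤ x ^ 2 - x := by nlinarith
    have h := Real.quadratic_le_exp_of_nonneg hz
    have e : Real.exp (x - x ^ 2) * Real.exp (x ^ 2 - x) = 1 := by
      rw [← Real.exp_add]; simp
    have hp : 1 ≤ (1 + x) * (1 + (x ^ 2 - x) + (x ^ 2 - x) ^ 2 / 2) := by
      have : 0 ≤ x ^ 2 * (1 + x - x ^ 2 + x ^ 3) := by
        apply mul_nonneg (sq_nonneg x)
        nlinarith [mul_nonneg (sq_nonneg x) (by linarith : (0 : ℝ) ≤ x + 1 / 2)]
      nlinarith
    have hp2 : 1 ≤ (1 + x) * Real.exp (x ^ 2 - x) :=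
      hp.trans (mul_le_mul_of_nonneg_left h (by linarith))
    by_contra hc
    push Not at hc
    nlinarith [mul_lt_mul_of_pos_right hc (Real.exp_pos (x ^ 2 - x))]

theorem ηI_pos (j : ℕ) : 0 < ηI j := by
  unfold ηI
  exact lt_min (by norm_num) (by positivity)

theorem ηI_le (j : ℕ) : ηI j ≤ 1 / 2 := min_le_left _ _

theorem ηI_eq {j : ℕ} (hj : 2 ≤ j) : ηI j = 1 / Real.sqrt (2 ^ j) := by
  unfold ηI
  apply min_eq_right
  apply one_div_le_one_div_of_le (by norm_num)
  apply Real.le_sqrt_of_sq_le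
  have : (2 : ℝ) ^ 2 ≤ 2 ^ j := pow_le_pow_right₀ (by norm_num) hj
  exact this

theorem mem_dyadicI {j k t : ℕ} : t ∈ dyadicI j k ↔ k * 2 ^ j ≤ t ∧ t < (k + 1) * 2 ^ j := by
  have : 0 < (k + 1) * 2 ^ j := by positivity
  rw [dyadicI, Finset.mem_Icc]
  omega

theorem dyadicI_eq_Ico (j k : ℕ) : dyadicI j k = Finset.Ico (k * 2 ^ j) ((k + 1) * 2 ^ j) := by
  ext t
  rw [mem_dyadicI, Finset.mem_Ico]

theorem card_dyadicI (j k : ℕ) : (dyadicI j k).card = 2 ^ j := by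
  rw [dyadicI_eq_Ico, Nat.card_Ico, add_mul, one_mul, Nat.add_sub_cancel_left]

theorem mem_ACT {j k t : ℕ} : (j, k) ∈ ACT t ↔ 1 ≤ k ∧ t ∈ dyadicI j k := by
  simp only [ACT, Finset.mem_filter, Finset.mem_product, Finset.mem_Iic, Finset.mem_Icc]
  constructor
  · rintro ⟨⟨_, h, _⟩, h'⟩
    exact ⟨h, h'⟩
  · rintro ⟨hk, h⟩
    have h1 := (mem_dyadicI.mp h).1
    have hp : 0 < 2 ^ j := by positivity
    refine ⟨⟨?_, hk, ?_⟩, h⟩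
    · exact Nat.le_log_of_pow_le (by norm_num) (by nlinarith)
    · nlinarith

/-- **Lemma 2.**  Under the OCELAD weight construction (unnormalized weights
`w̃_t(I)` multiplicatively updated by `1 + η_I ρ_t r_t(I)` on `I`; active
weights `w_t(I) = η_I w̃_t(I)`; ensemble estimate `θ̂_t` the `w_t`-weighted
average of the active learners; estimated regrets
`r_t(I) = ℓ_t(θ̂_t) − ℓ_t(θ_t(I))`; normalization
`ρ_t = 1 / max_{I∈ACT(t)} |r_t(I)|`), every dyadic interval `I = [q, s]`,
with `q = k·2^j` and `s + 1 = (k+1)·2^j`, satisfies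
`∑_{t=q}^{s} ρ_t r_t(I) ≤ 5 ln(s+1) √|I|`. -/
theorem ocelad_per_interval_weighted_regret
    (n : ℕ) (hn : 1 ≤ n)
    (Θ : Set (EuclideanSpace ℝ (Fin n))) (hΘ : Convex ℝ Θ)
    (ℓ : ℕ → EuclideanSpace ℝ (Fin n) → ℝ)
    (hℓconv : ∀ t, ConvexOn ℝ Θ (ℓ t))
    (θL : ℕ × ℕ → ℕ → EuclideanSpace ℝ (Fin n))
    (hθL : ∀ j k, 1 ≤ k → ∀ t ∈ dyadicI j k, θL (j, k) t ∈ Θ)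
    (wt : ℕ × ℕ → ℕ → ℝ)    -- the unnormalized weights `w̃`
    (w : ℕ × ℕ → ℕ → ℝ)     -- the active-learner weights `w`
    (θhat : ℕ → EuclideanSpace ℝ (Fin n))
    (r : ℕ × ℕ → ℕ → ℝ) (ρ : ℕ → ℝ)
    -- definition of `w̃`
    (hwt_zero : ∀ j k, 1 ≤ k → ∀ t < k * 2 ^ j, wt (j, k) t = 0)
    (hwt_init : ∀ j k, 1 ≤ k → wt (j, k) (k * 2 ^ j) = 1)
    (hwt_rec : ∀ j k, 1 ≤ k → ∀ t ∈ dyadicI j k,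
      wt (j, k) (t + 1) = wt (j, k) t * (1 + ηI j * ρ t * r (j, k) t))
    (hwt_frozen : ∀ j k, 1 ≤ k → ∀ t, (k + 1) * 2 ^ j ≤ t →
      wt (j, k) t = wt (j, k) ((k + 1) * 2 ^ j))
    -- `w_t(I) = η_I w̃_t(I)` for `t ∈ I`, and `0` otherwise
    (hw : ∀ j k, 1 ≤ k → ∀ t,
      w (j, k) t = if t ∈ dyadicI j k then ηI j * wt (j, k) t else 0)
    -- the ensemble estimate is the weighted average of the active learners
    (hθhat : ∀ t, 1 ≤ t →
      θhat t = (∑ I ∈ ACT t, w I t)⁻¹ • ∑ I ∈ ACT t, w I t • θL I t)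
    -- the estimated regrets
    (hr : ∀ I t, r I t = ℓ t (θhat t) - ℓ t (θL I t))
    -- `ρ_t = 1 / max_{I ∈ ACT(t)} |r_t(I)|`, with `ρ_t = 1` if the max is `0`
    (hρ : ∀ t, 1 ≤ t →
      ((∀ I ∈ ACT t, r I t = 0) → ρ t = 1) ∧
      ((∃ I ∈ ACT t, r I t ≠ 0) →
        ∃ I ∈ ACT t, ρ t = |r I t|⁻¹ ∧ ∀ J ∈ ACT t, |r J t| ≤ |r I t|)) :
    ∀ j k : ℕ, 1 ≤ k →
      (∑ t ∈ dyadicI j k, ρ t * r (j, k) t) ≤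
        5 * Real.log (((k + 1) * 2 ^ j : ℕ)) * Real.sqrt ((2 : ℝ) ^ j) := by
  have hq : ∀ j k : ℕ, 1 ≤ k → 1 ≤ k * 2 ^ j := fun j k hk => Nat.mul_pos hk (by positivity)
  have hqT : ∀ j k : ℕ, k * 2 ^ j ≤ (k + 1) * 2 ^ j :=
    fun j k => Nat.mul_le_mul_right _ (by omega)
  have hρr : ∀ t, 1 ≤ t → 0 ≤ ρ t ∧ ∀ I ∈ ACT t, |ρ t * r I t| ≤ 1 := by
    intro t ht
    by_cases h : ∀ I ∈ ACT t, r I t = 0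
    · have h1 := (hρ t ht).1 h
      exact ⟨by rw [h1]; norm_num, fun I hI => by simp [h I hI]⟩
    · push Not at h
      obtain ⟨I, hI, h1, h2⟩ := (hρ t ht).2 h
      refine ⟨by rw [h1]; positivity, fun J hJ => ?_⟩
      rw [h1, abs_mul, abs_inv, abs_abs]
      exact inv_mul_le_one_of_le₀ (h2 J hJ) (abs_nonneg _)
  have hx : ∀ j k, 1 ≤ k → ∀ t ∈ dyadicI j k, |ρ t * r (j, k) t| ≤ 1 := by
    intro j k hk t ht
    have ht1 : 1 ≤ t := (hq j k hk).trans (mem_dyadicI.mp ht).1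
    exact (hρr t ht1).2 _ (mem_ACT.mpr ⟨hk, ht⟩)
  have hηx : ∀ j k, 1 ≤ k → ∀ t ∈ dyadicI j k, |ηI j * ρ t * r (j, k) t| ≤ ηI j := by
    intro j k hk t ht
    rw [mul_assoc, abs_mul, abs_of_pos (ηI_pos j)]
    exact mul_le_of_le_one_right (ηI_pos j).le (hx j k hk t ht)
  have hexp : ∀ j k, 1 ≤ k → ∀ t, k * 2 ^ j ≤ t → t ≤ (k + 1) * 2 ^ j →
      Real.exp (∑ i ∈ Finset.Ico (k * 2 ^ j) t, (ηI j * (ρ i * r (j, k) i) - ηI j ^ 2))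
        ≤ wt (j, k) t := by
    intro j k hk t hqt
    induction t, hqt using Nat.le_induction with
    | base => intro _; simp [hwt_init j k hk]
    | succ t hqt ih =>
      intro ht
      have ih := ih (by omega)
      have hmem : t ∈ dyadicI j k := mem_dyadicI.mpr ⟨hqt, by omega⟩
      have hb := hηx j k hk t hmem
      have hb2 := abs_le.mp hb
      have hη := ηI_le j
      rw [Finset.sum_Ico_succ_top hqt, Real.exp_add, hwt_rec j k hk t hmem]
      refine mul_le_mul ih ?_ (Real.exp_pos _).le ((Real.exp_pos _).le.trans ih)
      refine le_trans (Real.exp_le_exp.mpr ?_)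
        (exp_sub_sq_le_one_add (x := ηI j * ρ t * r (j, k) t) (by linarith) (by linarith))
      have := sq_le_sq' hb2.1 hb2.2
      rw [mul_assoc] at this ⊢
      linarith
  have hpos : ∀ j k, 1 ≤ k → ∀ t, k * 2 ^ j ≤ t → 0 < wt (j, k) t := by
    intro j k hk t hqt
    rcases le_total t ((k + 1) * 2 ^ j) with h | h
    · exact (Real.exp_pos _).trans_le (hexp j k hk t hqt h)
    · rw [hwt_frozen j k hk t h]
      exact (Real.exp_pos _).trans_le (hexp j k hk _ (hqT j k) le_rfl)
  have hwpos : ∀ t, 1 ≤ t → ∀ I ∈ ACT t, 0 < w I t := by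
    rintro t ht ⟨a, b⟩ hI
    obtain ⟨hb, hm⟩ := mem_ACT.mp hI
    rw [hw a b hb, if_pos hm]
    exact mul_pos (ηI_pos a) (hpos a b hb t (mem_dyadicI.mp hm).1)
  have hjensen : ∀ t, 1 ≤ t → ∑ I ∈ ACT t, w I t * r I t ≤ 0 := by
    intro t ht
    have hne : (ACT t).Nonempty :=
      ⟨(0, t), mem_ACT.mpr ⟨ht, mem_dyadicI.mpr ⟨by simp, by simp⟩⟩⟩
    have hW : 0 < ∑ I ∈ ACT t, w I t := Finset.sum_pos (hwpos t ht) hne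
    have hJ := (hℓconv t).map_centerMass_le (t := ACT t) (w := fun I => w I t)
      (p := fun I => θL I t) (fun I hI => (hwpos t ht I hI).le) hW (by
        rintro ⟨a, b⟩ hI
        obtain ⟨hb, hm⟩ := mem_ACT.mp hI
        exact hθL a b hb t hm)
    have hc : (ACT t).centerMass (fun I => w I t) (fun I => θL I t) = θhat t := by
      rw [hθhat t ht, Finset.centerMass]
    rw [hc, Finset.centerMass, smul_eq_mul, inv_mul_eq_div, le_div_iff₀ hW] at hJ
    have e : ∑ I ∈ ACT t, w I t * r I t
        = ℓ t (θhat t) * ∑ I ∈ ACT t, w I t - ∑ I ∈ ACT t, w I t * ℓ t (θL I t) := by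
      rw [Finset.mul_sum, ← Finset.sum_sub_distrib]
      refine Finset.sum_congr rfl fun I _ => ?_
      rw [hr]; ring
    rw [e]
    simpa using hJ
  -- Evaluating `wt` at `max t q` counts an interval that has not started yet with weight `1`.
  have hstep : ∀ j k, 1 ≤ k → ∀ t,
      wt (j, k) (max (t + 1) (k * 2 ^ j))
        = wt (j, k) (max t (k * 2 ^ j)) + ρ t * (w (j, k) t * r (j, k) t) := by
    intro j k hk t
    rw [hw j k hk]
    by_cases hm : t ∈ dyadicI j k
    · have h1 := (mem_dyadicI.mp hm).1
      rw [if_pos hm, max_eq_left h1, max_eq_left (by omega), hwt_rec j k hk t hm]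
      ring
    · rw [if_neg hm, zero_mul, mul_zero, add_zero]
      rw [mem_dyadicI, not_and_or, not_le, not_lt] at hm
      rcases hm with h | h
      · rw [max_eq_right h.le, max_eq_right (by omega)]
      · have hle := hqT j k
        rw [max_eq_left (by omega), max_eq_left (by omega), hwt_frozen j k hk t h,
          hwt_frozen j k hk (t + 1) (by omega)]
  have hupper : ∀ j k, 1 ≤ k →
      wt (j, k) ((k + 1) * 2 ^ j) ≤ ((((k + 1) * 2 ^ j : ℕ)) : ℝ) ^ 2 := by
    intro j k hk
    set T := (k + 1) * 2 ^ j with hT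
    have hT1 : 1 ≤ T := hq j (k + 1) (by omega)
    set A : Finset (ℕ × ℕ) := Finset.Iic (Nat.log 2 T) ×ˢ Finset.Icc 1 T with hA
    have hA1 : ∀ p ∈ A, 1 ≤ p.2 := by
      intro p hp
      rw [hA, Finset.mem_product, Finset.mem_Icc] at hp
      exact hp.2.1
    have hU : ∀ t, 1 ≤ t → t ≤ T →
        ∑ p ∈ A, wt p (max t (p.2 * 2 ^ p.1)) ≤ (A.card : ℝ) := by
      intro t ht
      induction t, ht using Nat.le_induction with
      | base =>
        intro _
        apply le_of_eq
        rw [Finset.card_eq_sum_ones, Nat.cast_sum]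
        refine Finset.sum_congr rfl fun p hp => ?_
        rw [max_eq_right (hq p.1 p.2 (hA1 p hp)), hwt_init p.1 p.2 (hA1 p hp), Nat.cast_one]
      | succ t ht ih =>
        intro htT
        have hsub : ACT t ⊆ A := by
          intro p hp
          rw [ACT, Finset.mem_filter, Finset.mem_product, Finset.mem_Iic, Finset.mem_Icc] at hp
          rw [hA, Finset.mem_product, Finset.mem_Iic, Finset.mem_Icc]
          exact ⟨hp.1.1.trans (Nat.log_mono_right (by omega)), hp.1.2.1, by omega⟩
        have e1 : ∑ p ∈ A, wt p (max (t + 1) (p.2 * 2 ^ p.1))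
            = ∑ p ∈ A, wt p (max t (p.2 * 2 ^ p.1)) + ρ t * ∑ p ∈ A, w p t * r p t := by
          rw [Finset.mul_sum, ← Finset.sum_add_distrib]
          exact Finset.sum_congr rfl fun p hp => hstep p.1 p.2 (hA1 p hp) t
        have e2 : ∑ p ∈ ACT t, w p t * r p t = ∑ p ∈ A, w p t * r p t := by
          refine Finset.sum_subset hsub fun p hp hn => ?_
          have hn' : t ∉ dyadicI p.1 p.2 := fun h => hn (mem_ACT.mpr ⟨hA1 p hp, h⟩)
          have := hw p.1 p.2 (hA1 p hp) t
          rw [if_neg hn'] at this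
          rw [this, zero_mul]
        rw [e1, ← e2]
        have := mul_nonpos_of_nonneg_of_nonpos (hρr t ht).1 (hjensen t ht)
        linarith [ih (by omega)]
    have hmem : (j, k) ∈ A := by
      have hp : 0 < 2 ^ j := by positivity
      rw [hA, Finset.mem_product, Finset.mem_Iic, Finset.mem_Icc]
      exact ⟨Nat.le_log_of_pow_le (by norm_num) (by nlinarith), hk, by nlinarith⟩
    have h1 := Finset.single_le_sum (f := fun p : ℕ × ℕ => wt p (max T (p.2 * 2 ^ p.1)))
      (fun p hp => (hpos p.1 p.2 (hA1 p hp) _ (le_max_right _ _)).le) hmem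
    have hle : k * 2 ^ j ≤ T := hqT j k
    simp only [max_eq_left hle] at h1
    have hcard : A.card ≤ T ^ 2 := by
      rw [hA, Finset.card_product, Nat.card_Iic, Nat.card_Icc, sq, Nat.add_sub_cancel]
      exact Nat.mul_le_mul_right _ (Nat.log_lt_self 2 (by omega))
    have hcard' : (A.card : ℝ) ≤ (T : ℝ) ^ 2 := by exact_mod_cast hcard
    linarith [hU T hT1 le_rfl]
  intro j k hk
  have hl2 := Real.log_two_gt_d9
  have hTl : (j + 1) * Real.log 2 ≤ Real.log (((k + 1) * 2 ^ j : ℕ)) := by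
    have : ((j + 1 : ℕ) : ℝ) * Real.log 2 = Real.log (2 ^ (j + 1)) := by rw [Real.log_pow]
    rw [← Nat.cast_succ, this]
    apply Real.log_le_log (by positivity)
    have h : 2 ^ (j + 1) ≤ (k + 1) * 2 ^ j := by
      rw [pow_succ']; exact Nat.mul_le_mul_right _ (by omega)
    exact_mod_cast h
  set L := Real.log (((k + 1) * 2 ^ j : ℕ)) with hL
  have hs1 : 1 ≤ Real.sqrt ((2 : ℝ) ^ j) :=
    Real.one_le_sqrt.mpr (one_le_pow₀ (by norm_num))
  rcases lt_or_ge j 2 with hj | hj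
  · have h1 : ∑ t ∈ dyadicI j k, ρ t * r (j, k) t ≤ 2 ^ j := by
      have := Finset.sum_le_card_nsmul (dyadicI j k) (fun t => ρ t * r (j, k) t) 1
        (fun t ht => (abs_le.mp (hx j k hk t ht)).2)
      rw [card_dyadicI] at this
      simpa using this
    have h2 : (2 : ℝ) ^ j ≤ 5 * L := by
      interval_cases j <;> norm_num at hTl ⊢ <;> linarith
    have hL0 : 0 ≤ 5 * L := le_trans (by positivity) h2
    nlinarith
  · have h1 := (hexp j k hk ((k + 1) * 2 ^ j) (hqT j k) le_rfl).trans (hupper j k hk)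
    have hTpos : (0 : ℝ) < (((k + 1) * 2 ^ j : ℕ) : ℝ) := by
      exact_mod_cast hq j (k + 1) (by omega)
    rw [← Real.le_log_iff_exp_le (by positivity), Real.log_pow, ← dyadicI_eq_Ico,
      Finset.sum_sub_distrib, ← Finset.mul_sum, Finset.sum_const, card_dyadicI, ← hL,
      nsmul_eq_mul, ηI_eq hj] at h1
    have hsq : Real.sqrt ((2 : ℝ) ^ j) ^ 2 = 2 ^ j := Real.sq_sqrt (by positivity)
    push_cast at h1
    rw [← hsq, Real.sqrt_sq (by positivity)] at h1
    set s := Real.sqrt ((2 : ℝ) ^ j)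
    have hs0 : s ≠ 0 := by positivity
    have e : s ^ 2 * (1 / s) ^ 2 = 1 := by field_simp
    rw [e, one_div, inv_mul_eq_div, sub_le_iff_le_add, div_le_iff₀ (by positivity)] at h1
    have hj' : (2 : ℝ) ≤ j := by exact_mod_cast hj
    have hL1 : 1 ≤ L := by nlinarith
    nlinarith
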